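/- Let G be a finite group containing no element whose order is divisible by p²q² for any two distinct primes p and q. Suppose that for every x ∈ G of prime order p, the centralizer C_G(x) is either a p-group, or there exist subgroups Z and P of C_G(x) such that Z is a normal cyclic q-group for some prime q ≠ p, P is a p-group, Z ∩ P is trivial, and Z together with P generate C_G(x) (i.e., C_G(x) is an internal semidirect product C_{q^n} ⋊ P). Then the power graph of G is chordal. -/

import Mathlib

/-- The power graph of a group: distinct `x` and `y` are adjacent iff one is a power
of the other. -/
def powerGraph (G : Type*) [Group G] : SimpleGraph G :=
  SimpleGraph.fromRel (fun x y => x ∈ Subgroup.zpowers y)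

/-- A graph is chordal if it has no induced cycle on at least 4 vertices. -/
def IsChordal {V : Type*} (Γ : SimpleGraph V) : Prop :=
  ∀ n : ℕ, 4 ≤ n → IsEmpty (SimpleGraph.cycleGraph n ↪g Γ)

/-!
Write `x ≤ y` for `x ∈ ⟨y⟩`. The vertices of an induced cycle alternate between lower and upper
ones, so it contains a zigzag `s ≤ a ≥ t ≤ c ≥ u` in which `s, t` and `t, u` and `a, c` are
incomparable. A cyclic `p`-group has no incomparable elements, so if `x ∈ ⟨t⟩` has prime order
`p`, then `a` and `c` are elements of `C(x)` whose orders have a prime divisor other than `p`,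
necessarily the prime `q` attached to `C(x)`. Their subgroups of order `q` lie in the cyclic
normal `q`-subgroup `Z` of `C(x)`, hence coincide; let `y` be a generator. Inside `C(x) ∩ C(y)`
the `q`-parts of `a` and `c` lie in `Z` and their `p`-parts in the cyclic normal `p`-subgroup `Y`
of `C(y)`. These parts normalize `Y` and `Z`, so every `p`-part commutes with every `q`-part. If
`|a| = p^i q^j` and `|c| = p^k q^l`, there are thus elements of orders `p^i q^l` and `p^k q^j`.
All four exponents are positive and no order is divisible by `p²q²`, so `(i, j)` and `(k, l)` are
comparable, and by cyclicity of `Y` and `Z` so are `a` and `c`.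
-/

open Subgroup

section Graph

variable {V : Type*} {r : V → V → Prop}

theorem cycleGraph_adj_add_one {n : ℕ} (i : Fin (n + 2)) :
    (SimpleGraph.cycleGraph (n + 2)).Adj i (i + 1) :=
  SimpleGraph.cycleGraph_adj.2 (.inr (add_sub_cancel_left i 1))

theorem cycleGraph_not_adj_add_one_add_one {n : ℕ} (i : Fin (n + 4)) :
    ¬ (SimpleGraph.cycleGraph (n + 4)).Adj i (i + 1 + 1) := by
  rw [SimpleGraph.cycleGraph_adj, add_assoc i, sub_add_cancel_left, add_sub_cancel_left,
    neg_eq_iff_add_eq_zero]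
  simp [Fin.ext_iff, Fin.val_add, Nat.mod_eq_of_lt]

theorem fromRel_adj_iff_of_ne {x y : V} (hxy : x ≠ y) :
    (SimpleGraph.fromRel r).Adj x y ↔ r x y ∨ r y x :=
  and_iff_right hxy

theorem exists_zigzag_of_incompRel [IsTrans V r] {ι : Type*} [Nonempty ι] {σ : ι → ι} {v : ι → V}
    (hcomp : ∀ i, r (v i) (v (σ i)) ∨ r (v (σ i)) (v i))
    (hincomp : ∀ i, IncompRel r (v i) (v (σ (σ i)))) :
    ∃ i, r (v i) (v (σ i)) ∧ r (v (σ (σ i))) (v (σ i)) ∧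
      r (v (σ (σ i))) (v (σ (σ (σ i)))) ∧ r (v (σ (σ (σ (σ i))))) (v (σ (σ (σ i)))) := by
  have descend (i : ι) (h : r (v i) (v (σ i))) : r (v (σ (σ i))) (v (σ i)) :=
    (hcomp (σ i)).resolve_left fun h' ↦ (hincomp i).1 (_root_.trans h h')
  have ascend (i : ι) (h : r (v (σ i)) (v i)) : r (v (σ i)) (v (σ (σ i))) :=
    (hcomp (σ i)).resolve_right fun h' ↦ (hincomp i).2 (_root_.trans h' h)
  obtain ⟨i, hi⟩ : ∃ i, r (v i) (v (σ i)) :=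
    have ⟨i⟩ := ‹Nonempty ι›
    (hcomp i).elim (fun h ↦ ⟨i, h⟩) fun h ↦ ⟨σ i, ascend i h⟩
  have hi' := ascend (σ i) (descend i hi)
  exact ⟨i, hi, descend i hi, hi', descend (σ (σ i)) hi'⟩

theorem isChordal_fromRel_of_zigzag [IsTrans V r]
    (h : ∀ {s a t c u : V}, r s a → r t a → r t c → r u c →
      IncompRel r s t → IncompRel r t u → r a c ∨ r c a) :
    IsChordal (SimpleGraph.fromRel r) := by
  intro n hn
  obtain ⟨n, rfl⟩ := Nat.exists_eq_add_of_le' hn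
  refine ⟨fun f ↦ ?_⟩
  have hcomp (i : Fin (n + 4)) : r (f i) (f (i + 1)) ∨ r (f (i + 1)) (f i) :=
    (f.map_adj_iff.2 (cycleGraph_adj_add_one i)).2
  have hincomp (i : Fin (n + 4)) : IncompRel r (f i) (f (i + 1 + 1)) := by
    have hne : i ≠ i + 1 + 1 := by
      simp [add_assoc, Fin.ext_iff, Fin.val_add, Nat.mod_eq_of_lt]
    have hnot := mt f.map_adj_iff.1 (cycleGraph_not_adj_add_one_add_one i)
    rwa [fromRel_adj_iff_of_ne (f.injective.ne hne), not_or] at hnot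
  obtain ⟨i, hsa, hta, htc, huc⟩ := exists_zigzag_of_incompRel hcomp hincomp
  exact (h hsa hta htc huc (hincomp i) (hincomp (i + 1 + 1))).elim
    (hincomp (i + 1)).1 (hincomp (i + 1)).2

end Graph

theorem ne_zero_of_prime_dvd_pow_mul_pow {p q i j : ℕ} (hp : p.Prime) (hq : q.Prime) (hpq : p ≠ q)
    (h : p ∣ p ^ i * q ^ j) : i ≠ 0 := by
  rintro rfl
  rw [pow_zero, one_mul] at h
  exact hpq (Nat.prime_eq_prime_of_dvd_pow hp hq h)

section Group

variable {G : Type*} [Group G] {g x y : G} {H K : Subgroup G}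

theorem mem_of_pow_mem_of_coprime {m n : ℕ} (hmn : m.Coprime n) (hm : g ^ m ∈ H)
    (hn : g ^ n ∈ H) : g ∈ H := by
  have hbezout : g ^ ((m.gcd n : ℕ) : ℤ) ∈ H := by
    rw [Nat.gcd_eq_gcd_ab, zpow_add, zpow_mul, zpow_mul, zpow_natCast, zpow_natCast]
    exact H.mul_mem (H.zpow_mem hm _) (H.zpow_mem hn _)
  simpa [hmn.gcd_eq_one] using hbezout

theorem orderOf_pow_eq_of_orderOf_eq_mul {m n : ℕ} (hm : m ≠ 0) (hg : orderOf g = m * n) :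
    orderOf (g ^ m) = n := by
  rw [orderOf_pow_of_dvd hm (hg ▸ Dvd.intro n rfl), hg, Nat.mul_div_cancel_left _ hm.pos]

theorem exists_mem_zpowers_orderOf_eq {n : ℕ} (hg : orderOf g ≠ 0) (hn : n ∣ orderOf g) :
    ∃ x ∈ zpowers g, orderOf x = n :=
  ⟨g ^ (orderOf g / n), npow_mem_zpowers g _, orderOf_pow_orderOf_div hg hn⟩

theorem zpowers_eq_of_mem_of_pow_orderOf_eq_one (hy : IsOfFinOrder y) (hyx : y ∈ zpowers x)
    (hx : x ^ orderOf y = 1) : zpowers y = zpowers x := by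
  have hxfin : IsOfFinOrder x := isOfFinOrder_iff_pow_eq_one.2 ⟨_, hy.orderOf_pos, hx⟩
  have : Finite (zpowers x) := hxfin.finite_zpowers
  refine eq_of_le_of_card_ge (zpowers_le.2 hyx) ?_
  rw [Nat.card_zpowers, Nat.card_zpowers]
  exact Nat.le_of_dvd hy.orderOf_pos (orderOf_dvd_of_pow_eq_one hx)

theorem mem_zpowers_of_orderOf_dvd_of_isCyclic [IsCyclic H] (hx : x ∈ H) (hy : y ∈ H)
    (hfin : IsOfFinOrder y) (hdvd : orderOf x ∣ orderOf y) : x ∈ zpowers y := by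
  obtain ⟨w, rfl⟩ := (Subgroup.isCyclic_iff_exists_zpowers_eq_top H).1 ‹_›
  obtain ⟨a, rfl⟩ := mem_zpowers_iff.1 hx
  obtain ⟨b, rfl⟩ := mem_zpowers_iff.1 hy
  have hgcd : (w ^ (a.gcd b : ℤ)) ^ orderOf (w ^ b) = 1 := by
    rw [Int.gcd_eq_gcd_ab, zpow_add, zpow_mul, zpow_mul,
      (((Commute.refl w).zpow_zpow a b).zpow_zpow _ _).mul_pow, ← zpow_natCast, zpow_comm,
      ← zpow_natCast, zpow_comm (w ^ b), zpow_natCast, zpow_natCast, pow_orderOf_eq_one,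
      orderOf_dvd_iff_pow_eq_one.1 hdvd, one_zpow, one_zpow, one_mul]
  have hmem {n : ℤ} (hn : (a.gcd b : ℤ) ∣ n) : w ^ n ∈ zpowers (w ^ (a.gcd b : ℤ)) := by
    obtain ⟨c, rfl⟩ := hn
    exact mem_zpowers_iff.2 ⟨c, (zpow_mul w _ c).symm⟩
  rw [zpowers_eq_of_mem_of_pow_orderOf_eq_one hfin (hmem (Int.gcd_dvd_right a b)) hgcd]
  exact hmem (Int.gcd_dvd_left a b)

theorem exists_prime_ne_dvd_orderOf_of_incompRel (hg : IsOfFinOrder g) (hx : x ∈ zpowers g)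
    (hy : y ∈ zpowers g) (hxy : IncompRel (fun x y ↦ x ∈ zpowers y) x y) {p : ℕ} (hp : p.Prime) :
    ∃ q, q.Prime ∧ q ≠ p ∧ q ∣ orderOf g := by
  by_contra! hall
  have hpow := Nat.eq_prime_pow_of_unique_prime_dvd hg.orderOf_pos.ne'
    fun {r} hr hrg ↦ by_contra fun hrp ↦ hall r hr hrp hrg
  obtain ⟨m, -, hm⟩ := (Nat.dvd_prime_pow hp).1 (hpow ▸ orderOf_dvd_of_mem_zpowers hx)
  obtain ⟨n, -, hn⟩ := (Nat.dvd_prime_pow hp).1 (hpow ▸ orderOf_dvd_of_mem_zpowers hy)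
  obtain hdvd | hdvd : orderOf x ∣ orderOf y ∨ orderOf y ∣ orderOf x := by
    rw [hm, hn]
    exact (le_total m n).imp (pow_dvd_pow p) (pow_dvd_pow p)
  · exact hxy.1 (mem_zpowers_of_orderOf_dvd_of_isCyclic hx hy (hg.of_mem_zpowers hy) hdvd)
  · exact hxy.2 (mem_zpowers_of_orderOf_dvd_of_isCyclic hy hx (hg.of_mem_zpowers hx) hdvd)

theorem commute_of_mem_normalizer_of_disjoint (hHK : Disjoint H K) (hxH : x ∈ H) (hyK : y ∈ K)
    (hxK : x ∈ normalizer K) (hyH : y ∈ normalizer H) : Commute x y := by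
  rw [← commutatorElement_eq_one_iff_commute, ← mem_bot, ← hHK.eq_bot, mem_inf,
    commutatorElement_def]
  constructor
  · rw [mul_assoc, mul_assoc, ← mul_assoc y]
    exact H.mul_mem hxH ((mem_normalizer_iff.1 hyH _).1 (H.inv_mem hxH))
  · exact K.mul_mem ((mem_normalizer_iff.1 hxK _).1 hyK) (K.inv_mem hyK)

theorem exists_pow_mem_of_mem_sup {p : ℕ} (hK : IsPGroup p K) (hKH : K ≤ normalizer H)
    (hg : g ∈ H ⊔ K) : ∃ k, g ^ p ^ k ∈ H := by
  rw [← SetLike.mem_coe, coe_mul_of_right_le_normalizer_left H K hKH] at hg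
  obtain ⟨z, hz, u, hu, rfl⟩ := hg
  have hcoset (n : ℕ) : (z * u) ^ n * (u ^ n)⁻¹ ∈ H := by
    induction n with
    | zero => simp
    | succ n ih =>
      have hconj := (mem_normalizer_iff.1 (hKH (K.pow_mem hu n)) z).1 hz
      convert H.mul_mem ih hconj using 1
      rw [pow_succ, pow_succ]
      group
  obtain ⟨k, hk⟩ := hK ⟨u, hu⟩
  have huk : u ^ p ^ k = 1 := congrArg Subtype.val hk
  exact ⟨k, by simpa [huk] using hcoset (p ^ k)⟩

theorem mem_centralizer_of_mem_zpowers (hx : x ∈ zpowers g) : g ∈ centralizer {x} := by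
  obtain ⟨n, rfl⟩ := mem_zpowers_iff.1 hx
  exact mem_centralizer_singleton_iff.2 (Commute.self_zpow g n)

theorem le_normalizer_of_forall_conj_mem (h : ∀ g ∈ K, ∀ z ∈ H, g * z * g⁻¹ ∈ H) :
    K ≤ normalizer H := fun g hg ↦
  mem_normalizer_iff.2 fun z ↦ ⟨h g hg z, fun hz ↦ by
    simpa [mul_assoc] using h g⁻¹ (K.inv_mem hg) _ hz⟩

theorem isPGroup_of_forall_orderOf_eq {p : ℕ} (h : ∀ g ∈ H, ∃ k, orderOf g = p ^ k) :
    IsPGroup p H :=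
  isPGroup_iff_orderOf_dvd_pow.2 fun g ↦ (h g g.2).imp fun _ hk ↦ by rw [← orderOf_coe, hk]

end Group

/-- `C` is an extension of a `p`-group by the cyclic `q`-group `Z`: the latter is normal in `C`, and
the quotient being a `p`-group is expressed by `p`-power powers of elements of `C` lying in `Z`. -/
structure IsCyclicByPGroup {G : Type*} [Group G] (p q : ℕ) (Z C : Subgroup G) : Prop where
  le : Z ≤ C
  le_normalizer : C ≤ normalizer Z
  isCyclic : IsCyclic Z
  isPGroup : IsPGroup q Z
  exists_pow_mem : ∀ g ∈ C, ∃ k, g ^ p ^ k ∈ Z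

namespace IsCyclicByPGroup

variable {G : Type*} [Group G] {p q : ℕ} {Z Y C D : Subgroup G} {a c g : G}

theorem of_isPGroup (hC : IsPGroup p C) : IsCyclicByPGroup p q ⊥ C where
  le := bot_le
  le_normalizer := le_normalizer_of_normal
  isCyclic := inferInstance
  isPGroup := .of_bot
  exists_pow_mem g hg := (hC ⟨g, hg⟩).imp fun _ hk ↦ mem_bot.2 (congrArg Subtype.val hk)

theorem of_sup (hZ : IsCyclic Z) (hqZ : IsPGroup q Z) (hpY : IsPGroup p Y)
    (hYZ : Y ≤ normalizer Z) : IsCyclicByPGroup p q Z (Z ⊔ Y) where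
  le := le_sup_left
  le_normalizer := sup_le Subgroup.le_normalizer hYZ
  isCyclic := hZ
  isPGroup := hqZ
  exists_pow_mem _ hg := exists_pow_mem_of_mem_sup hpY hYZ hg

theorem mem_of_coprime_orderOf (h : IsCyclicByPGroup p q Z C) (hg : g ∈ C)
    (hcop : p.Coprime (orderOf g)) : g ∈ Z := by
  obtain ⟨k, hk⟩ := h.exists_pow_mem g hg
  exact mem_of_pow_mem_of_coprime (hcop.pow_left k) hk (by simp)

theorem exists_orderOf_eq (h : IsCyclicByPGroup p q Z C) (hp : p.Prime) (hq : q.Prime)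
    (hg : g ∈ C) : ∃ i j, orderOf g = p ^ i * q ^ j := by
  obtain ⟨k, hk⟩ := h.exists_pow_mem g hg
  obtain ⟨m, hm⟩ := h.isPGroup ⟨_, hk⟩
  have hdvd : orderOf g ∣ p ^ k * q ^ m :=
    orderOf_dvd_of_pow_eq_one (by simpa [pow_mul] using congrArg Subtype.val hm)
  obtain ⟨_, _, hi, hj, hij⟩ := Nat.dvd_mul.1 hdvd
  obtain ⟨i, -, rfl⟩ := (Nat.dvd_prime_pow hp).1 hi
  obtain ⟨j, -, rfl⟩ := (Nat.dvd_prime_pow hq).1 hj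
  exact ⟨i, j, hij.symm⟩

theorem orderOf_ne_zero (h : IsCyclicByPGroup p q Z C) (hp : p.Prime) (hq : q.Prime)
    (hg : g ∈ C) : orderOf g ≠ 0 := by
  obtain ⟨i, j, hij⟩ := h.exists_orderOf_eq hp hq hg
  rw [hij]
  exact mul_ne_zero (pow_ne_zero i hp.ne_zero) (pow_ne_zero j hq.ne_zero)

theorem eq_of_prime_dvd_orderOf (h : IsCyclicByPGroup p q Z C) (hp : p.Prime) (hq : q.Prime)
    (hg : g ∈ C) {r : ℕ} (hr : r.Prime) (hrp : r ≠ p) (hrg : r ∣ orderOf g) : r = q := by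
  obtain ⟨i, j, hij⟩ := h.exists_orderOf_eq hp hq hg
  rw [hij, hr.dvd_mul] at hrg
  exact hrg.elim (fun hi ↦ absurd (Nat.prime_eq_prime_of_dvd_pow hr hp hi) hrp)
    (Nat.prime_eq_prime_of_dvd_pow hr hq)

theorem pow_mem_of_orderOf_eq (h : IsCyclicByPGroup p q Z C) (hp : p ≠ 0) (hpq : p.Coprime q)
    (hg : g ∈ C) {i j : ℕ} (hij : orderOf g = p ^ i * q ^ j) : g ^ p ^ i ∈ Z := by
  refine h.mem_of_coprime_orderOf (C.pow_mem hg _) ?_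
  rw [orderOf_pow_eq_of_orderOf_eq_mul (pow_ne_zero i hp) hij]
  exact hpq.pow_right j

theorem pow_mem_zpowers_of_le (h : IsCyclicByPGroup p q Z C) (hp : p ≠ 0) (hq : q ≠ 0)
    (hpq : p.Coprime q) (ha : a ∈ C) (hc : c ∈ C) {i j k l : ℕ}
    (hij : orderOf a = p ^ i * q ^ j) (hkl : orderOf c = p ^ k * q ^ l) (hjl : j ≤ l) :
    a ^ p ^ i ∈ zpowers c := by
  have := h.isCyclic
  have hoa := orderOf_pow_eq_of_orderOf_eq_mul (pow_ne_zero i hp) hij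
  have hoc := orderOf_pow_eq_of_orderOf_eq_mul (pow_ne_zero k hp) hkl
  have hmem : a ^ p ^ i ∈ zpowers (c ^ p ^ k) := by
    refine mem_zpowers_of_orderOf_dvd_of_isCyclic (h.pow_mem_of_orderOf_eq hp hpq ha hij)
      (h.pow_mem_of_orderOf_eq hp hpq hc hkl) ?_ (hoa ▸ hoc ▸ pow_dvd_pow q hjl)
    exact orderOf_ne_zero_iff.1 (hoc ▸ pow_ne_zero l hq)
  exact zpowers_le.2 (npow_mem_zpowers c _) hmem

theorem mem_zpowers_of_le (hZ : IsCyclicByPGroup p q Z C) (hY : IsCyclicByPGroup q p Y D)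
    (hp : p ≠ 0) (hq : q ≠ 0) (hpq : p.Coprime q) (ha : a ∈ C ⊓ D) (hc : c ∈ C ⊓ D)
    {i j k l : ℕ} (hij : orderOf a = p ^ i * q ^ j) (hkl : orderOf c = p ^ k * q ^ l)
    (hik : i ≤ k) (hjl : j ≤ l) : a ∈ zpowers c :=
  mem_of_pow_mem_of_coprime (hpq.pow i j)
    (hZ.pow_mem_zpowers_of_le hp hq hpq ha.1 hc.1 hij hkl hjl)
    (hY.pow_mem_zpowers_of_le hq hp hpq.symm ha.2 hc.2 (mul_comm (p ^ i) _ ▸ hij)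
      (mul_comm (p ^ k) _ ▸ hkl) hik)

theorem exists_orderOf_eq_mul (hZ : IsCyclicByPGroup p q Z C) (hY : IsCyclicByPGroup q p Y D)
    (hp : p ≠ 0) (hq : q ≠ 0) (hpq : p.Coprime q) (ha : a ∈ C ⊓ D) (hc : c ∈ C ⊓ D)
    {i j k l : ℕ} (hij : orderOf a = p ^ i * q ^ j) (hkl : orderOf c = p ^ k * q ^ l) :
    ∃ g : G, orderOf g = p ^ i * q ^ l := by
  have hij' : orderOf a = q ^ j * p ^ i := by rw [hij, mul_comm]
  have hoa := orderOf_pow_eq_of_orderOf_eq_mul (pow_ne_zero j hq) hij'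
  have hoc := orderOf_pow_eq_of_orderOf_eq_mul (pow_ne_zero k hp) hkl
  have hcomm : Commute (a ^ q ^ j) (c ^ p ^ k) :=
    commute_of_mem_normalizer_of_disjoint
      (hY.isPGroup.disjoint_of_coprime hZ.isPGroup hpq)
      (hY.pow_mem_of_orderOf_eq hq hpq.symm ha.2 hij') (hZ.pow_mem_of_orderOf_eq hp hpq hc.1 hkl)
      (hZ.le_normalizer (C.pow_mem ha.1 _)) (hY.le_normalizer (D.pow_mem hc.2 _))
  refine ⟨a ^ q ^ j * c ^ p ^ k, ?_⟩
  rw [hcomm.orderOf_mul_eq_mul_orderOf_of_coprime (by rw [hoa, hoc]; exact hpq.pow i l), hoa, hoc]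

theorem exists_orderOf_eq_mem_zpowers_mem_zpowers (h : IsCyclicByPGroup p q Z C) (hp : p.Prime)
    (hq : q.Prime) (hpq : p.Coprime q) (ha : a ∈ C) (hc : c ∈ C) (hqa : q ∣ orderOf a)
    (hqc : q ∣ orderOf c) : ∃ y, orderOf y = q ∧ y ∈ zpowers a ∧ y ∈ zpowers c := by
  have := h.isCyclic
  obtain ⟨y, hya, hy⟩ := exists_mem_zpowers_orderOf_eq (h.orderOf_ne_zero hp hq ha) hqa
  obtain ⟨z, hzc, hz⟩ := exists_mem_zpowers_orderOf_eq (h.orderOf_ne_zero hp hq hc) hqc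
  have hyZ : y ∈ Z := h.mem_of_coprime_orderOf (zpowers_le.2 ha hya) (hy.symm ▸ hpq)
  have hzZ : z ∈ Z := h.mem_of_coprime_orderOf (zpowers_le.2 hc hzc) (hz.symm ▸ hpq)
  have hyz : y ∈ zpowers z := mem_zpowers_of_orderOf_dvd_of_isCyclic hyZ hzZ
    (orderOf_ne_zero_iff.1 (hz ▸ hq.ne_zero)) (hy.trans hz.symm).dvd
  exact ⟨y, hy, hya, zpowers_le.2 hzc hyz⟩

theorem mem_zpowers_or_mem_zpowers (hZ : IsCyclicByPGroup p q Z C)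
    (hY : IsCyclicByPGroup q p Y D) (hp : p.Prime) (hq : q.Prime) (hpq : p ≠ q)
    (hord : ∀ g : G, ¬ p ^ 2 * q ^ 2 ∣ orderOf g) (ha : a ∈ C ⊓ D) (hc : c ∈ C ⊓ D)
    (hpa : p ∣ orderOf a) (hqa : q ∣ orderOf a) (hpc : p ∣ orderOf c) (hqc : q ∣ orderOf c) :
    a ∈ zpowers c ∨ c ∈ zpowers a := by
  have hcop : p.Coprime q := (Nat.coprime_primes hp hq).2 hpq
  obtain ⟨i, j, hij⟩ := hZ.exists_orderOf_eq hp hq ha.1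
  obtain ⟨k, l, hkl⟩ := hZ.exists_orderOf_eq hp hq hc.1
  have hsmall {a c : G} (ha : a ∈ C ⊓ D) (hc : c ∈ C ⊓ D) {i j k l : ℕ}
      (hij : orderOf a = p ^ i * q ^ j) (hkl : orderOf c = p ^ k * q ^ l) : i < 2 ∨ l < 2 := by
    obtain ⟨g, hg⟩ := hZ.exists_orderOf_eq_mul hY hp.ne_zero hq.ne_zero hcop ha hc hij hkl
    by_contra! hil
    exact hord g (hg ▸ mul_dvd_mul (pow_dvd_pow p hil.1) (pow_dvd_pow q hil.2))
  have hi : i ≠ 0 := ne_zero_of_prime_dvd_pow_mul_pow hp hq hpq (hij ▸ hpa)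
  have hj : j ≠ 0 :=
    ne_zero_of_prime_dvd_pow_mul_pow hq hp hpq.symm (mul_comm (p ^ i) _ ▸ hij ▸ hqa)
  have hk : k ≠ 0 := ne_zero_of_prime_dvd_pow_mul_pow hp hq hpq (hkl ▸ hpc)
  have hl : l ≠ 0 :=
    ne_zero_of_prime_dvd_pow_mul_pow hq hp hpq.symm (mul_comm (p ^ k) _ ▸ hkl ▸ hqc)
  have hil := hsmall ha hc hij hkl
  have hkj := hsmall hc ha hkl hij
  obtain ⟨hik, hjl⟩ | ⟨hki, hlj⟩ : i ≤ k ∧ j ≤ l ∨ k ≤ i ∧ l ≤ j := by omega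
  · exact .inl (hZ.mem_zpowers_of_le hY hp.ne_zero hq.ne_zero hcop ha hc hij hkl hik hjl)
  · exact .inr (hZ.mem_zpowers_of_le hY hp.ne_zero hq.ne_zero hcop hc ha hkl hij hki hlj)

end IsCyclicByPGroup

theorem mem_zpowers_or_mem_zpowers_of_orderOf_eq_prime {G : Type*} [Group G]
    (hord : ∀ (g : G) (p q : ℕ), p.Prime → q.Prime → p ≠ q → ¬ p ^ 2 * q ^ 2 ∣ orderOf g)
    (hcent : ∀ (x : G) (p : ℕ), p.Prime → orderOf x = p →
      ∃ (q : ℕ) (Z : Subgroup G), q.Prime ∧ q ≠ p ∧ IsCyclicByPGroup p q Z (centralizer {x}))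
    {p : ℕ} {x a c : G} (hp : p.Prime) (hx : orderOf x = p) (hxa : x ∈ zpowers a)
    (hxc : x ∈ zpowers c) (ha : ∃ r, r.Prime ∧ r ≠ p ∧ r ∣ orderOf a)
    (hc : ∃ r, r.Prime ∧ r ≠ p ∧ r ∣ orderOf c) : a ∈ zpowers c ∨ c ∈ zpowers a := by
  obtain ⟨q, Z, hq, hqp, hZ⟩ := hcent x p hp hx
  have hax : a ∈ centralizer {x} := mem_centralizer_of_mem_zpowers hxa
  have hcx : c ∈ centralizer {x} := mem_centralizer_of_mem_zpowers hxc
  have hpa : p ∣ orderOf a := hx ▸ orderOf_dvd_of_mem_zpowers hxa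
  have hpc : p ∣ orderOf c := hx ▸ orderOf_dvd_of_mem_zpowers hxc
  have hqa : q ∣ orderOf a := by
    obtain ⟨r, hr, hrp, hra⟩ := ha
    exact hZ.eq_of_prime_dvd_orderOf hp hq hax hr hrp hra ▸ hra
  have hqc : q ∣ orderOf c := by
    obtain ⟨r, hr, hrp, hrc⟩ := hc
    exact hZ.eq_of_prime_dvd_orderOf hp hq hcx hr hrp hrc ▸ hrc
  obtain ⟨y, hy, hya, hyc⟩ := hZ.exists_orderOf_eq_mem_zpowers_mem_zpowers hp hq
    ((Nat.coprime_primes hp hq).2 hqp.symm) hax hcx hqa hqc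
  have hay : a ∈ centralizer {y} := mem_centralizer_of_mem_zpowers hya
  have hcy : c ∈ centralizer {y} := mem_centralizer_of_mem_zpowers hyc
  obtain ⟨p', Y, hp', -, hY⟩ := hcent y q hq hy
  obtain rfl : p = p' := hY.eq_of_prime_dvd_orderOf hq hp' hay hp hqp.symm hpa
  exact hZ.mem_zpowers_or_mem_zpowers hY hp hq hqp.symm (hord · p q hp hq hqp.symm)
    ⟨hax, hay⟩ ⟨hcx, hcy⟩ hpa hqa hpc hqc

theorem stmt11_general (G : Type*) [Group G] (hG : IsMulTorsion G)
    (hord : ∀ (g : G) (p q : ℕ), p.Prime → q.Prime → p ≠ q → ¬ p ^ 2 * q ^ 2 ∣ orderOf g)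
    (hcent : ∀ (x : G) (p : ℕ), p.Prime → orderOf x = p →
      ∃ (q : ℕ) (Z : Subgroup G), q.Prime ∧ q ≠ p ∧ IsCyclicByPGroup p q Z (centralizer {x})) :
    IsChordal (powerGraph G) := by
  have : IsTrans G (fun x y ↦ x ∈ zpowers y) := ⟨fun _ _ _ hxy hyz ↦ zpowers_le.2 hyz hxy⟩
  refine isChordal_fromRel_of_zigzag fun {s a t c u} hsa hta htc huc hst htu ↦ ?_
  have ht : orderOf t ≠ 1 := fun h ↦ hst.2 (orderOf_eq_one_iff.1 h ▸ one_mem _)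
  obtain ⟨p, hp, hpt⟩ := Nat.exists_prime_and_dvd ht
  obtain ⟨x, hxt, hx⟩ := exists_mem_zpowers_orderOf_eq (hG t).orderOf_pos.ne' hpt
  exact mem_zpowers_or_mem_zpowers_of_orderOf_eq_prime hord hcent hp hx
    (zpowers_le.2 hta hxt) (zpowers_le.2 htc hxt)
    (exists_prime_ne_dvd_orderOf_of_incompRel (hG a) hsa hta hst hp)
    (exists_prime_ne_dvd_orderOf_of_incompRel (hG c) htc huc htu hp)

theorem stmt11 (G : Type*) [Group G] [Fintype G]
    (hord : ∀ (g : G) (p q : ℕ), p.Prime → q.Prime → p ≠ q → ¬ p ^ 2 * q ^ 2 ∣ orderOf g)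
    (hcent : ∀ (x : G) (p : ℕ), p.Prime → orderOf x = p →
      (∀ y ∈ Subgroup.centralizer {x}, ∃ k : ℕ, orderOf y = p ^ k) ∨
      (∃ (q : ℕ) (Z P : Subgroup G), q.Prime ∧ q ≠ p ∧
        Z ≤ Subgroup.centralizer {x} ∧ P ≤ Subgroup.centralizer {x} ∧
        IsCyclic Z ∧ (∀ z ∈ Z, ∃ k : ℕ, orderOf z = q ^ k) ∧
        (∀ y ∈ P, ∃ k : ℕ, orderOf y = p ^ k) ∧
        (∀ g ∈ Subgroup.centralizer {x}, ∀ z ∈ Z, g * z * g⁻¹ ∈ Z) ∧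
        Z ⊓ P = ⊥ ∧ Z ⊔ P = Subgroup.centralizer {x})) :
    IsChordal (powerGraph G) := by
  refine stmt11_general G isMulTorsion_of_finite hord fun x p hp hx ↦ ?_
  rcases hcent x p hp hx with hC | ⟨q, Z, P, hq, hqp, -, hPC, hcyc, hZ, hP, hconj, -, hsup⟩
  · obtain ⟨q, hpq, hq⟩ := Nat.exists_infinite_primes (p + 1)
    exact ⟨q, ⊥, hq, Nat.ne_of_gt hpq, .of_isPGroup (isPGroup_of_forall_orderOf_eq hC)⟩
  · exact ⟨q, Z, hq, hqp, hsup ▸ .of_sup hcyc (isPGroup_of_forall_orderOf_eq hZ)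
      (isPGroup_of_forall_orderOf_eq hP) (hPC.trans (le_normalizer_of_forall_conj_mem hconj))⟩
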